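/- arXiv:2201.05328 — 2 statements merged into one kernel-verified Lean document; each statement's English description precedes it below -/
import Mathlib

section
/- For every real ω, ∫_{−∞}^{∞} sech t · cos(ωt) dt = π sech(πω/2), where sech s = 1/cosh s. -/
open Real

/-!
The substitution `x = sigmoid t` turns Euler's integral into
`B(u, v) = ∫ t, sigmoid t ^ u * sigmoid (-t) ^ v` over the whole line. For `u + v = 1` the integrand
is `exp (u * t) / (1 + exp t)`, and the reflection formula for `Γ` evaluates the integral as
`π / sin (π * u)`. Taking `u = (1 + z) / 2` and rescaling `t` by `2` gives the two-sided Laplace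
transform `∫ t, exp (z * t) / cosh t = π / cos (π * z / 2)` on the strip `|re z| < 1`; the cosine
integral is the mean of its values at `z = ± i ω`.
-/

open Set MeasureTheory

section Sigmoid

variable {E : Type*} [NormedAddCommGroup E] [NormedSpace ℝ E]

theorem integrableOn_Ioo_zero_one_iff_comp_sigmoid (f : ℝ → E) :
    IntegrableOn f (Ioo 0 1) ↔
      Integrable fun t ↦ (sigmoid t * sigmoid (-t)) • f (sigmoid t) := by
  simp only [sigmoid_neg]
  rw [← range_sigmoid, ← image_univ, integrableOn_image_iff_integrableOn_deriv_smul_of_monotoneOn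
    MeasurableSet.univ (fun t _ ↦ (hasDerivAt_sigmoid t).hasDerivWithinAt)
    (sigmoid_monotone.monotoneOn _), integrableOn_univ]

theorem integral_Ioo_zero_one_eq_integral_comp_sigmoid (f : ℝ → E) :
    ∫ x in Ioo 0 1, f x = ∫ t, (sigmoid t * sigmoid (-t)) • f (sigmoid t) := by
  simp only [sigmoid_neg]
  rw [← range_sigmoid, ← image_univ, integral_image_eq_integral_deriv_smul_of_monotoneOn
    MeasurableSet.univ (fun t _ ↦ (hasDerivAt_sigmoid t).hasDerivWithinAt)
    (sigmoid_monotone.monotoneOn _), setIntegral_univ]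

theorem ofReal_sigmoid_ne_zero (t : ℝ) : (sigmoid t : ℂ) ≠ 0 :=
  Complex.ofReal_ne_zero.2 (sigmoid_pos t).ne'

theorem sigmoid_mul_sigmoid_neg_smul_betaIntegrand (u v : ℂ) (t : ℝ) :
    (sigmoid t * sigmoid (-t)) •
        ((sigmoid t : ℂ) ^ (u - 1) * (1 - (sigmoid t : ℂ)) ^ (v - 1)) =
      (sigmoid t : ℂ) ^ u * (sigmoid (-t) : ℂ) ^ v := by
  have sigmoid_ne := ofReal_sigmoid_ne_zero t
  have sigmoid_neg_ne := ofReal_sigmoid_ne_zero (-t)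
  have one_sub_sigmoid : 1 - (sigmoid t : ℂ) = sigmoid (-t) := by
    rw [sigmoid_neg, Complex.ofReal_sub, Complex.ofReal_one]
  rw [one_sub_sigmoid, Complex.cpow_sub _ _ sigmoid_ne, Complex.cpow_sub _ _ sigmoid_neg_ne,
    Complex.cpow_one, Complex.cpow_one, Complex.real_smul, Complex.ofReal_mul]
  field_simp

theorem integrable_sigmoid_cpow_mul_sigmoid_neg_cpow {u v : ℂ} (hu : 0 < u.re) (hv : 0 < v.re) :
    Integrable fun t : ℝ ↦ (sigmoid t : ℂ) ^ u * (sigmoid (-t) : ℂ) ^ v := by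
  have h := Complex.betaIntegral_convergent hu hv
  rw [intervalIntegrable_iff_integrableOn_Ioo_of_le zero_le_one,
    integrableOn_Ioo_zero_one_iff_comp_sigmoid] at h
  simpa only [sigmoid_mul_sigmoid_neg_smul_betaIntegrand] using h

theorem integral_sigmoid_cpow_mul_sigmoid_neg_cpow (u v : ℂ) :
    ∫ t : ℝ, (sigmoid t : ℂ) ^ u * (sigmoid (-t) : ℂ) ^ v = Complex.betaIntegral u v := by
  rw [Complex.betaIntegral, intervalIntegral.integral_of_le zero_le_one,
    integral_Ioc_eq_integral_Ioo, integral_Ioo_zero_one_eq_integral_comp_sigmoid]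
  simp only [sigmoid_mul_sigmoid_neg_smul_betaIntegrand]

theorem sigmoid_cpow_mul_sigmoid_neg_cpow (u v : ℂ) (t : ℝ) :
    (sigmoid t : ℂ) ^ u * (sigmoid (-t) : ℂ) ^ v =
      Complex.exp (u * t) * (sigmoid (-t) : ℂ) ^ (u + v) := by
  have sigmoid_eq : sigmoid t = exp t * sigmoid (-t) := by
    simpa only [neg_neg, mul_comm] using (sigmoid_mul_rexp_neg (-t)).symm
  have exp_cpow : (exp t : ℂ) ^ u = Complex.exp (u * t) := by
    rw [Complex.cpow_def_of_ne_zero (Complex.ofReal_ne_zero.2 (exp_ne_zero t)),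
      ← Complex.ofReal_log (exp_nonneg t), log_exp, mul_comm]
  rw [sigmoid_eq, Complex.ofReal_mul,
    Complex.mul_cpow_ofReal_nonneg (exp_nonneg t) (sigmoid_nonneg (-t)), exp_cpow, mul_assoc,
    ← Complex.cpow_add _ _ (ofReal_sigmoid_ne_zero (-t))]

end Sigmoid

theorem cexp_mul_div_one_add_cexp_eq_sigmoid_cpow_mul (s : ℂ) (t : ℝ) :
    Complex.exp (s * t) / (1 + Complex.exp t) =
      (sigmoid t : ℂ) ^ s * (sigmoid (-t) : ℂ) ^ (1 - s) := by
  rw [sigmoid_cpow_mul_sigmoid_neg_cpow, add_sub_cancel, Complex.cpow_one, sigmoid_def, neg_neg]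
  push_cast
  rw [div_eq_mul_inv]

theorem integrable_cexp_mul_div_one_add_cexp {s : ℂ} (hs₀ : 0 < s.re) (hs₁ : s.re < 1) :
    Integrable fun t : ℝ ↦ Complex.exp (s * t) / (1 + Complex.exp t) := by
  simp only [cexp_mul_div_one_add_cexp_eq_sigmoid_cpow_mul]
  exact integrable_sigmoid_cpow_mul_sigmoid_neg_cpow hs₀ (by simpa using hs₁)

theorem integral_cexp_mul_div_one_add_cexp {s : ℂ} (hs₀ : 0 < s.re) (hs₁ : s.re < 1) :
    ∫ t : ℝ, Complex.exp (s * t) / (1 + Complex.exp t) = π / Complex.sin (π * s) := by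
  simp only [cexp_mul_div_one_add_cexp_eq_sigmoid_cpow_mul]
  rw [integral_sigmoid_cpow_mul_sigmoid_neg_cpow,
    Complex.betaIntegral_eq_Gamma_mul_div _ _ hs₀ (by simpa using hs₁), add_sub_cancel,
    Complex.Gamma_one, div_one, Complex.Gamma_mul_Gamma_one_sub]

theorem cexp_mul_div_cosh (z : ℂ) (t : ℝ) :
    Complex.exp (z * t) / Complex.cosh t =
      2 * (Complex.exp ((1 + z) / 2 * (2 * t : ℝ)) / (1 + Complex.exp (2 * t : ℝ))) := by
  have numerator : Complex.exp ((1 + z) / 2 * (2 * t : ℝ)) =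
      Complex.exp t * Complex.exp (z * t) := by
    rw [← Complex.exp_add]
    push_cast
    ring_nf
  have denominator : 1 + Complex.exp (2 * t : ℝ) = Complex.exp t * (2 * Complex.cosh t) := by
    rw [Complex.two_cosh, mul_add, ← Complex.exp_add, ← Complex.exp_add, add_neg_cancel,
      Complex.exp_zero, add_comm, Complex.ofReal_mul, Complex.ofReal_ofNat, two_mul]
  rw [numerator, denominator, mul_div_mul_left _ _ (Complex.exp_ne_zero _), ← mul_div_assoc,
    mul_div_mul_left _ _ two_ne_zero]

theorem re_one_add_div_two_mem_Ioo {z : ℂ} (hz : |z.re| < 1) : ((1 + z) / 2).re ∈ Ioo 0 1 := by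
  obtain ⟨hz₁, hz₂⟩ := abs_lt.1 hz
  rw [Complex.div_ofNat_re, Complex.add_re, Complex.one_re]
  constructor <;> linarith

theorem integrable_cexp_mul_div_cosh {z : ℂ} (hz : |z.re| < 1) :
    Integrable fun t : ℝ ↦ Complex.exp (z * t) / Complex.cosh t := by
  obtain ⟨hs₀, hs₁⟩ := re_one_add_div_two_mem_Ioo hz
  simp only [cexp_mul_div_cosh]
  exact ((integrable_cexp_mul_div_one_add_cexp hs₀ hs₁).comp_mul_left' two_ne_zero).const_mul 2

theorem integral_cexp_mul_div_cosh {z : ℂ} (hz : |z.re| < 1) :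
    ∫ t : ℝ, Complex.exp (z * t) / Complex.cosh t = π / Complex.cos (π * z / 2) := by
  obtain ⟨hs₀, hs₁⟩ := re_one_add_div_two_mem_Ioo hz
  have sin_eq : Complex.sin (π * ((1 + z) / 2)) = Complex.cos (π * z / 2) := by
    rw [← Complex.sin_add_pi_div_two]
    ring_nf
  simp only [cexp_mul_div_cosh]
  rw [integral_const_mul, Measure.integral_comp_mul_left
      (fun t : ℝ ↦ Complex.exp ((1 + z) / 2 * t) / (1 + Complex.exp t)),
    integral_cexp_mul_div_one_add_cexp hs₀ hs₁, sin_eq, abs_of_pos (by norm_num),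
    Complex.real_smul]
  push_cast
  ring

theorem stmt_12_general {ω : ℂ} (hω : |ω.im| < 1) :
    ∫ t : ℝ, (1 / Complex.cosh t) * Complex.cos (ω * t) =
      π * (1 / Complex.cosh (π * ω / 2)) := by
  have h_pos : |(ω * Complex.I).re| < 1 := by simpa using hω
  have h_neg : |(-(ω * Complex.I)).re| < 1 := by simpa using hω
  have integrand_eq (t : ℝ) : (1 / Complex.cosh t) * Complex.cos (ω * t) =
      (Complex.exp (ω * Complex.I * t) / Complex.cosh t +
        Complex.exp (-(ω * Complex.I) * t) / Complex.cosh t) / 2 := by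
    rw [Complex.cos]
    ring_nf
  have cos_eq : Complex.cos (π * (ω * Complex.I) / 2) = Complex.cosh (π * ω / 2) := by
    rw [← Complex.cos_mul_I]
    ring_nf
  simp only [integrand_eq]
  rw [integral_div, integral_add (integrable_cexp_mul_div_cosh h_pos)
      (integrable_cexp_mul_div_cosh h_neg), integral_cexp_mul_div_cosh h_pos,
    integral_cexp_mul_div_cosh h_neg, mul_neg, neg_div, Complex.cos_neg, cos_eq, add_self_div_two,
    mul_one_div]

/-- For every real `ω`, `∫_{−∞}^{∞} sech t · cos(ωt) dt = π sech(πω/2)`,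
where `sech s = 1 / cosh s`. -/
theorem stmt_12 (ω : ℝ) :
    ∫ t : ℝ, (1 / Real.cosh t) * Real.cos (ω * t) = π * (1 / Real.cosh (π * ω / 2)) := by
  exact_mod_cast stmt_12_general (ω := ω) (by simp)
end

section
/- Let k ∈ (0, 1), let m, n be relatively prime positive integers, and suppose ω = πm/(2nK(k)), so that 2πm/ω = 4nK(k). Then for all real β, δ, θ, the subharmonic Melnikov integral along x^k evaluates as ∫₀^{2πm/ω} x^k₂(t)(β cos(ωt + θ) − δ x^k₂(t)) dt = −16nδ(E(k) − (1 − k²)K(k)) + J₂ β cos θ, where J₂ = 4π sech(ωK(k')) if n = 1 and m is odd, and J₂ = 0 if n ≠ 1 or m is even. -/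
open Real

/-- The complete elliptic integral of the first kind. -/
noncomputable def Kell (k : ℝ) : ℝ :=
  ∫ φ in (0 : ℝ)..(π / 2), 1 / Real.sqrt (1 - k ^ 2 * Real.sin φ ^ 2)

/-- The complete elliptic integral of the second kind. -/
noncomputable def Eell (k : ℝ) : ℝ :=
  ∫ φ in (0 : ℝ)..(π / 2), Real.sqrt (1 - k ^ 2 * Real.sin φ ^ 2)

/-!
In the amplitude variable `φ = am t` the orbit is `x₂ = 2 k cos φ = 2 k cn t`, so the dissipative
term reduces to complete elliptic integrals and the forcing term to the real part of a multiple of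
`∫ cn u exp (i ω u) du` over `n` periods of `cn`. Translation by the half period `2 K` multiplies
the integrand by `ρ = -exp (2 i ω K)`, and `ρ ^ (2 n) = 1`. Hence the integral vanishes unless
`ρ = 1`, which is `cos (ω K) = 0`, and happens exactly when `n = 1` and `m` is odd.

When `ρ = 1`, let `G v` be the integral of `cn (u + i v) exp (i ω u)` over `-K ≤ u ≤ K`. As `cn` is
holomorphic, `∂ᵥ cn = i ∂ᵤ cn`, and an integration by parts with cancelling boundary terms gives
`G' = ω G`, so that `(G v + G (-v)) / 2 = cosh (ω v) G 0`. The left side is the integral of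
`Re cn (u + i v) exp (i ω u)`, and as `v` tends to `K'` the pole of `cn` at `i K'` turns `Re cn`
into `π / k` times an approximate identity at `u = 0`. Therefore `cosh (ω K') G 0 = π / k`.
-/

open Set Filter Topology MeasureTheory

lemma eq_of_hasDerivAt_smul {E : Type*} [NormedAddCommGroup E] [NormedSpace ℝ E] {v : E → E}
    {K C : NNReal} (hv : LipschitzWith K v) {c : ℝ → ℝ} (hc : ∀ t, |c t| ≤ C) {f g : ℝ → E}
    (hf : ∀ t, HasDerivAt f (c t • v (f t)) t) (hg : ∀ t, HasDerivAt g (c t • v (g t)) t)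
    {t₀ : ℝ} (h0 : f t₀ = g t₀) : f = g := by
  have hlip (t : ℝ) : LipschitzOnWith (C * K) (fun p => c t • v p) univ :=
    LipschitzWith.lipschitzOnWith <| .of_dist_le_mul fun p q => by
      rw [dist_smul₀, NNReal.coe_mul, mul_assoc]
      exact mul_le_mul (hc t) (hv.dist_le_mul p q) dist_nonneg C.2
  exact ODE_solution_unique_univ hlip (fun t => ⟨hf t, mem_univ _⟩)
    (fun t => ⟨hg t, mem_univ _⟩) h0

lemma neg_exp_two_mul_mul_I_eq_one_iff (a : ℝ) :
    -Complex.exp (2 * a * Complex.I) = 1 ↔ cos a = 0 := by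
  have h : 1 + Complex.exp (2 * a * Complex.I) = 2 * cos a * Complex.exp (a * Complex.I) := by
    rw [Complex.ofReal_cos, Complex.two_cos, add_mul, ← Complex.exp_add, ← Complex.exp_add,
      ← add_mul, ← two_mul, neg_mul, neg_add_cancel, Complex.exp_zero, add_comm]
  rw [neg_eq_iff_add_eq_zero, add_comm, h]
  simp [-Complex.ofReal_cos]

lemma cos_pi_mul_div_two_mul_eq_zero_iff {m n : ℕ} (hn : 0 < n) (hmn : m.Coprime n) :
    cos (π * m / (2 * n)) = 0 ↔ n = 1 ∧ Odd m := by
  rw [cos_eq_zero_iff]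
  constructor
  · rintro ⟨j, hj⟩
    have hm : (m : ℤ) = n * (2 * j + 1) := by
      have : (m : ℝ) = n * (2 * j + 1) := by
        field_simp at hj
        linarith
      exact_mod_cast this
    obtain rfl : n = 1 := Nat.dvd_one.1 <| hmn.gcd_eq_one ▸
      Nat.dvd_gcd (Int.natCast_dvd_natCast.1 ⟨_, hm⟩) dvd_rfl
    exact ⟨rfl, Int.odd_coe_nat m |>.1 ⟨j, by simpa using hm⟩⟩
  · rintro ⟨rfl, j, rfl⟩
    exact ⟨j, by push_cast; ring⟩

section IntervalIntegral

variable {E : Type*} [NormedAddCommGroup E] [NormedSpace ℝ E]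

lemma hasDerivAt_integral_of_continuousOn {f f' : ℝ → ℝ → E} {U : Set ℝ} {a b x₀ : ℝ}
    (hU : U ∈ 𝓝 x₀) (hf : ∀ x ∈ U, ContinuousOn (f x) (uIcc a b))
    (hf' : ContinuousOn (Function.uncurry f') (U ×ˢ uIcc a b))
    (hd : ∀ x ∈ U, ∀ t ∈ uIcc a b, HasDerivAt (f · t) (f' x t) x) :
    HasDerivAt (fun x => ∫ t in a..b, f x t) (∫ t in a..b, f' x₀ t) x₀ := by
  obtain ⟨V, hV, hVU, hVc⟩ := local_compact_nhds hU
  obtain ⟨M, hM⟩ := (hVc.prod isCompact_uIcc).exists_bound_of_continuousOn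
    (hf'.mono (prod_mono_left hVU))
  have hcont : ContinuousOn (f' x₀) (uIcc a b) :=
    hf'.comp (f := fun t => (x₀, t)) (by fun_prop) fun t ht => ⟨mem_of_mem_nhds hU, ht⟩
  refine (intervalIntegral.hasDerivAt_integral_of_dominated_loc_of_deriv_le
    (bound := fun _ => M) hV ?_ (hf x₀ (mem_of_mem_nhds hU)).intervalIntegrable
    ((hcont.mono uIoc_subset_uIcc).aestronglyMeasurable measurableSet_uIoc) ?_
    intervalIntegrable_const ?_).2
  · filter_upwards [hU] with x hx
    exact ((hf x hx).mono uIoc_subset_uIcc).aestronglyMeasurable measurableSet_uIoc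
  · exact .of_forall fun t ht x hx => hM (x, t) ⟨hx, uIoc_subset_uIcc ht⟩
  · exact .of_forall fun t ht x hx => hd x (hVU hx) t (uIoc_subset_uIcc ht)

lemma integral_eq_zero_of_add_eq_mul {f : ℝ → ℂ} {T : ℝ} {ρ : ℂ} {N : ℕ}
    (hf : ∀ x, f (x + T) = ρ * f x) (hρN : ρ ^ N = 1) (hρ : ρ ≠ 1) :
    ∫ x in 0..(N * T), f x = 0 := by
  have hiter : ∀ (j : ℕ) x, f (x + j * T) = ρ ^ j * f x := fun j x => by
    induction j with
    | zero => simp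
    | succ j ih =>
      rw [Nat.cast_succ, add_one_mul, ← add_assoc, hf, ih, pow_succ']
      ring
  have hper : Function.Periodic f (N * T) := fun x => by rw [hiter, hρN, one_mul]
  have hshift : ρ * ∫ x in 0..(N * T), f x = ∫ x in 0..(N * T), f x := calc
    _ = ∫ x in 0..(N * T), f (x + T) := by simp only [hf, intervalIntegral.integral_const_mul]
    _ = ∫ x in T..(T + N * T), f x := by
      rw [intervalIntegral.integral_comp_add_right, zero_add, add_comm]
    _ = ∫ x in 0..(N * T), f x := by rw [hper.intervalIntegral_add_eq T 0, zero_add]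
  exact by_contra fun h => hρ ((mul_eq_right₀ h).1 hshift)

lemma integral_nat_mul_period_of_even {f : ℝ → E} {T : ℝ} (he : Function.Even f)
    (hp : Function.Periodic f T) (hf : ∀ a b, IntervalIntegrable f volume a b) (n : ℕ) :
    ∫ x in 0..(n * T), f x = (2 * n) • ∫ x in 0..(T / 2), f x := by
  have hhalf : ∫ x in (-(T / 2))..0, f x = ∫ x in 0..(T / 2), f x := by
    simpa only [he _, neg_zero] using
      (intervalIntegral.integral_comp_neg (a := 0) (b := T / 2) f).symm
  calc ∫ x in 0..(n * T), f x = n • ∫ x in 0..T, f x := by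
        simpa using hp.intervalIntegral_add_zsmul_eq n 0 hf
    _ = n • ∫ x in (-(T / 2))..(T / 2), f x := by
        simpa [show -(T / 2) + T = T / 2 by ring] using
          congrArg (n • ·) (hp.intervalIntegral_add_eq 0 (-(T / 2)))
    _ = (2 * n) • ∫ x in 0..(T / 2), f x := by
        rw [← intervalIntegral.integral_add_adjacent_intervals (hf _ 0) (hf 0 _), hhalf,
          ← two_nsmul, smul_smul, mul_comm]

end IntervalIntegral

/-- The Jacobi function `Δ(φ, k) = √(1 - k² sin² φ)`, which is `dn u` at `u = F(φ, k)`. -/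
noncomputable def ellipticDelta (k φ : ℝ) : ℝ := √(1 - k ^ 2 * sin φ ^ 2)

/-- The incomplete elliptic integral of the first kind `F(φ, k)`, the inverse of the Jacobi
amplitude: `φ = am u` at `u = F(φ, k)`. -/
noncomputable def ellipticF (k φ : ℝ) : ℝ := ∫ u in 0..φ, 1 / ellipticDelta k u

/-- The exponential `exp (i ω u)` at `u = F(φ, k)`. -/
noncomputable def ellipticExp (k ω φ : ℝ) : ℂ := Complex.exp (ω * ellipticF k φ * Complex.I)

section EllipticF

variable {k : ℝ}

lemma one_sub_sq_mul_sin_sq_pos (hk : k ^ 2 < 1) (φ : ℝ) : 0 < 1 - k ^ 2 * sin φ ^ 2 :=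
  sub_pos.2 <| (mul_le_of_le_one_right (sq_nonneg k) (sin_sq_le_one φ)).trans_lt hk

lemma ellipticDelta_pos (hk : k ^ 2 < 1) (φ : ℝ) : 0 < ellipticDelta k φ :=
  sqrt_pos.2 (one_sub_sq_mul_sin_sq_pos hk φ)

lemma ellipticDelta_ne_zero (hk : k ^ 2 < 1) (φ : ℝ) : ellipticDelta k φ ≠ 0 :=
  (ellipticDelta_pos hk φ).ne'

lemma ellipticDelta_sq (hk : k ^ 2 < 1) (φ : ℝ) :
    ellipticDelta k φ ^ 2 = 1 - k ^ 2 * sin φ ^ 2 :=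
  sq_sqrt (one_sub_sq_mul_sin_sq_pos hk φ).le

lemma ellipticDelta_zero : ellipticDelta k 0 = 1 := by simp [ellipticDelta]

lemma ellipticDelta_even : Function.Even (ellipticDelta k) := fun φ => by simp [ellipticDelta]

lemma ellipticDelta_periodic : Function.Periodic (ellipticDelta k) π := fun φ => by
  simp [ellipticDelta, sin_add_pi]

@[fun_prop]
lemma continuous_ellipticDelta : Continuous (ellipticDelta k) := by
  unfold ellipticDelta
  fun_prop

lemma hasDerivAt_ellipticDelta (hk : k ^ 2 < 1) (φ : ℝ) :
    HasDerivAt (ellipticDelta k) (-(k ^ 2 * sin φ * cos φ / ellipticDelta k φ)) φ := by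
  refine ((((hasDerivAt_sin φ).fun_pow 2).const_mul (k ^ 2)).const_sub 1).sqrt
    (one_sub_sq_mul_sin_sq_pos hk φ).ne' |>.congr_deriv ?_
  rw [← ellipticDelta]
  field_simp [ellipticDelta_ne_zero hk φ]
  push_cast
  ring

lemma continuous_inv_ellipticDelta (hk : k ^ 2 < 1) : Continuous fun φ => 1 / ellipticDelta k φ :=
  continuous_const.div continuous_ellipticDelta (ellipticDelta_ne_zero hk)

lemma hasDerivAt_ellipticF (hk : k ^ 2 < 1) (φ : ℝ) :
    HasDerivAt (ellipticF k) (1 / ellipticDelta k φ) φ :=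
  ((continuous_inv_ellipticDelta hk).integral_hasStrictDerivAt 0 φ).hasDerivAt

lemma continuous_ellipticF (hk : k ^ 2 < 1) : Continuous (ellipticF k) :=
  continuous_iff_continuousAt.2 fun φ => (hasDerivAt_ellipticF hk φ).continuousAt

lemma ellipticF_zero : ellipticF k 0 = 0 := intervalIntegral.integral_same

lemma ellipticF_pi_div_two : ellipticF k (π / 2) = Kell k := rfl

lemma ellipticF_neg (φ : ℝ) : ellipticF k (-φ) = -ellipticF k φ := by
  have h := intervalIntegral.integral_comp_neg (a := 0) (b := φ) fun u => 1 / ellipticDelta k u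
  simp only [ellipticDelta_even _, neg_zero] at h
  rw [ellipticF, ellipticF, h, intervalIntegral.integral_symm]

lemma ellipticF_nat_mul_pi (hk : k ^ 2 < 1) (n : ℕ) : ellipticF k (n * π) = 2 * n * Kell k := by
  simpa [← ellipticF_pi_div_two, ellipticF] using integral_nat_mul_period_of_even
    (ellipticDelta_even.left_comp (1 / ·)) (ellipticDelta_periodic.comp (1 / ·))
    (fun _ _ => (continuous_inv_ellipticDelta hk).intervalIntegrable _ _) n

lemma ellipticF_add_pi (hk : k ^ 2 < 1) (φ : ℝ) :
    ellipticF k (φ + π) = ellipticF k φ + 2 * Kell k := by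
  have hK : ellipticF k π = 2 * Kell k := by simpa using ellipticF_nat_mul_pi hk 1
  have h := (ellipticDelta_periodic.comp (1 / ·)).intervalIntegral_add_eq_add 0 φ fun _ _ =>
    (continuous_inv_ellipticDelta hk).intervalIntegrable _ _
  simp only [zero_add] at h
  exact h.trans (congrArg _ hK)

lemma Kell_pos (hk : k ^ 2 < 1) : 0 < Kell k :=
  intervalIntegral.intervalIntegral_pos_of_pos
    ((continuous_inv_ellipticDelta hk).intervalIntegrable _ _)
    (fun φ => one_div_pos.2 (ellipticDelta_pos hk φ)) pi_div_two_pos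

lemma hasDerivAt_ellipticExp (hk : k ^ 2 < 1) (ω φ : ℝ) :
    HasDerivAt (ellipticExp k ω)
      (ω * Complex.I * (ellipticExp k ω φ / ellipticDelta k φ)) φ := by
  refine ((((hasDerivAt_ellipticF hk φ).ofReal_comp).const_mul (ω : ℂ)).mul_const
    Complex.I).cexp.congr_deriv ?_
  rw [ellipticExp]
  push_cast
  ring

lemma continuous_ellipticExp_div_ellipticDelta (hk : k ^ 2 < 1) (ω : ℝ) :
    Continuous fun φ => ellipticExp k ω φ / ellipticDelta k φ := by
  have hF := continuous_ellipticF hk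
  unfold ellipticExp
  exact .div (by fun_prop) (by fun_prop) fun φ => mod_cast ellipticDelta_ne_zero hk φ

lemma ellipticExp_add_pi (hk : k ^ 2 < 1) (ω φ : ℝ) :
    ellipticExp k ω (φ + π) = Complex.exp (2 * (ω * Kell k) * Complex.I) *
      ellipticExp k ω φ := by
  rw [ellipticExp, ellipticExp, ellipticF_add_pi hk, ← Complex.exp_add]
  push_cast
  ring_nf

end EllipticF

section JacobiIdentities

-- The identities are the quotient rule for `d cn = -sn dn du` in the real and in the imaginary
-- direction, cleared of denominators. The letters `s, c, d` stand for `sin, cos, Δ` at `(φ, k)`,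
-- and the primed ones for `sin, cos, Δ` at `(ψ, l)`.

variable {k l s c d s' c' d' D : ℝ}

lemma complexCn_deriv_left_identity (hsc : s ^ 2 + c ^ 2 = 1) (hsc' : s' ^ 2 + c' ^ 2 = 1)
    (hd : d ^ 2 = 1 - k ^ 2 * s ^ 2) (hd' : d' ^ 2 = 1 - l ^ 2 * s' ^ 2) (hkl : k ^ 2 + l ^ 2 = 1)
    (hD : D = c' ^ 2 + k ^ 2 * s ^ 2 * s' ^ 2) :
    (-s * c' * d - c * (1 - 2 * k ^ 2 * s ^ 2) * s' * d' * Complex.I) * D -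
        (c * c' - s * d * s' * d' * Complex.I) * (2 * k ^ 2 * s * c * s' ^ 2 * d) =
      -((s * d' + c * d * s' * c' * Complex.I) *
        (d * c' * d' - k ^ 2 * s * c * s' * Complex.I)) := by
  have hre : d' ^ 2 = D + k ^ 2 * c ^ 2 * s' ^ 2 := by
    linear_combination hd' - hD - s' ^ 2 * hkl - hsc' - k ^ 2 * s' ^ 2 * hsc
  have him : d ^ 2 * c' ^ 2 - k ^ 2 * s ^ 2 =
      (1 - 2 * k ^ 2 * s ^ 2) * D - 2 * k ^ 2 * s ^ 2 * s' ^ 2 * d ^ 2 := by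
    grind
  rw [← Complex.ofReal_inj] at hre him
  push_cast at hre him
  linear_combination (s * c' * d) * hre + (c * s' * d' * Complex.I) * him -
    (k ^ 2 * s * c ^ 2 * d * s' ^ 2 * c') * Complex.I_sq

lemma complexCn_deriv_right_identity (hsc : s ^ 2 + c ^ 2 = 1) (hsc' : s' ^ 2 + c' ^ 2 = 1)
    (hd : d ^ 2 = 1 - k ^ 2 * s ^ 2) (hd' : d' ^ 2 = 1 - l ^ 2 * s' ^ 2) (hkl : k ^ 2 + l ^ 2 = 1)
    (hD : D = c' ^ 2 + k ^ 2 * s ^ 2 * s' ^ 2) :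
    (-c * s' * d' - s * d * (c' * (1 - 2 * l ^ 2 * s' ^ 2)) * Complex.I) * D -
        (c * c' - s * d * s' * d' * Complex.I) * (-2 * s' * c' * (1 - k ^ 2 * s ^ 2) * d') =
      -(Complex.I * ((s * d' + c * d * s' * c' * Complex.I) *
        (d * c' * d' - k ^ 2 * s * c * s' * Complex.I))) := by
  have hre : d ^ 2 * c' ^ 2 - k ^ 2 * s ^ 2 = 2 * (1 - k ^ 2 * s ^ 2) * c' ^ 2 - D := by
    linear_combination c' ^ 2 * hd + hD + k ^ 2 * s ^ 2 * hsc'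
  have him : d' ^ 2 + k ^ 2 * c ^ 2 * s' ^ 2 =
      (1 - 2 * l ^ 2 * s' ^ 2) * D + 2 * s' ^ 2 * d' ^ 2 * (1 - k ^ 2 * s ^ 2) := by
    grind
  rw [← Complex.ofReal_inj] at hre him
  push_cast at hre him
  linear_combination (s * c' * d * Complex.I) * him - (c * s' * d') * hre +
    (c * s' * d' * (d ^ 2 * c' ^ 2 - k ^ 2 * s ^ 2) -
      k ^ 2 * s * c ^ 2 * d * s' ^ 2 * c' * Complex.I) * Complex.I_sq

end JacobiIdentities

/-- The common denominator `1 - dn(u, k)² sn(v, k')²` of the addition formulas for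
`sn, cn, dn (u + i v)`, at `u = F(φ, k)` and `v = F(ψ, k')`. -/
noncomputable def jacobiDenom (k φ ψ : ℝ) : ℝ := cos ψ ^ 2 + k ^ 2 * sin φ ^ 2 * sin ψ ^ 2

/-- `sn(u + i v, k)` at `u = F(φ, k)` and `v = F(ψ, l)`, where `l = k'`. -/
noncomputable def complexSn (k l φ ψ : ℝ) : ℂ :=
  (sin φ * ellipticDelta l ψ + cos φ * ellipticDelta k φ * sin ψ * cos ψ * Complex.I) /
    jacobiDenom k φ ψ

/-- `cn(u + i v, k)` at `u = F(φ, k)` and `v = F(ψ, l)`, where `l = k'`. -/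
noncomputable def complexCn (k l φ ψ : ℝ) : ℂ :=
  (cos φ * cos ψ - sin φ * ellipticDelta k φ * sin ψ * ellipticDelta l ψ * Complex.I) /
    jacobiDenom k φ ψ

/-- `dn(u + i v, k)` at `u = F(φ, k)` and `v = F(ψ, l)`, where `l = k'`. -/
noncomputable def complexDn (k l φ ψ : ℝ) : ℂ :=
  (ellipticDelta k φ * cos ψ * ellipticDelta l ψ - k ^ 2 * sin φ * cos φ * sin ψ * Complex.I) /
    jacobiDenom k φ ψ

/-- The real part of `cn(u + i v, k)` at `u = F(φ, k)` and `v = F(ψ, k')`. -/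
noncomputable def reCn (k φ ψ : ℝ) : ℝ := cos φ * cos ψ / jacobiDenom k φ ψ

section ComplexCn

variable {k l φ ψ : ℝ}

lemma jacobiDenom_pos (hψ : ψ ∈ Ioo (-(π / 2)) (π / 2)) (φ : ℝ) : 0 < jacobiDenom k φ ψ := by
  have := cos_pos_of_mem_Ioo hψ
  unfold jacobiDenom
  positivity

lemma ofReal_jacobiDenom_ne_zero (hψ : ψ ∈ Ioo (-(π / 2)) (π / 2)) (φ : ℝ) :
    (jacobiDenom k φ ψ : ℂ) ≠ 0 :=
  Complex.ofReal_ne_zero.2 (jacobiDenom_pos hψ φ).ne'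

lemma complexCn_zero_right (φ : ℝ) : complexCn k l φ 0 = cos φ := by
  simp [complexCn, jacobiDenom]

lemma complexCn_add_complexCn_neg_right (φ ψ : ℝ) :
    complexCn k l φ ψ + complexCn k l φ (-ψ) = 2 * reCn k φ ψ := by
  simp only [complexCn, reCn, jacobiDenom, ellipticDelta_even _, cos_neg, sin_neg]
  push_cast
  ring

lemma complexCn_neg_pi_div_two (ψ : ℝ) :
    complexCn k l (-(π / 2)) ψ = -complexCn k l (π / 2) ψ := by
  simp only [complexCn, jacobiDenom, ellipticDelta_even _, cos_neg, sin_neg, cos_pi_div_two]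
  push_cast
  ring

section ContinuousOn

variable {X : Type*} [TopologicalSpace X] {s : Set X} {f g : X → ℝ}

lemma continuousOn_div_jacobiDenom {N : X → ℂ} (hN : ContinuousOn N s) (hf : ContinuousOn f s)
    (hg : ContinuousOn g s) (h : ∀ x ∈ s, g x ∈ Ioo (-(π / 2)) (π / 2)) :
    ContinuousOn (fun x => N x / jacobiDenom k (f x) (g x)) s := by
  refine hN.div ?_ fun x hx => ofReal_jacobiDenom_ne_zero (h x hx) (f x)
  unfold jacobiDenom
  fun_prop

lemma continuousOn_complexCn_comp (hf : ContinuousOn f s) (hg : ContinuousOn g s)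
    (h : ∀ x ∈ s, g x ∈ Ioo (-(π / 2)) (π / 2)) :
    ContinuousOn (fun x => complexCn k l (f x) (g x)) s :=
  continuousOn_div_jacobiDenom (by fun_prop) hf hg h

lemma continuousOn_complexSn_comp (hf : ContinuousOn f s) (hg : ContinuousOn g s)
    (h : ∀ x ∈ s, g x ∈ Ioo (-(π / 2)) (π / 2)) :
    ContinuousOn (fun x => complexSn k l (f x) (g x)) s :=
  continuousOn_div_jacobiDenom (by fun_prop) hf hg h

lemma continuousOn_complexDn_comp (hf : ContinuousOn f s) (hg : ContinuousOn g s)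
    (h : ∀ x ∈ s, g x ∈ Ioo (-(π / 2)) (π / 2)) :
    ContinuousOn (fun x => complexDn k l (f x) (g x)) s :=
  continuousOn_div_jacobiDenom (by fun_prop) hf hg h

end ContinuousOn

lemma hasDerivAt_jacobiDenom_left (k φ ψ : ℝ) :
    HasDerivAt (jacobiDenom k · ψ) (2 * k ^ 2 * sin φ * cos φ * sin ψ ^ 2) φ :=
  (((((hasDerivAt_sin φ).fun_pow 2).const_mul (k ^ 2)).mul_const (sin ψ ^ 2)).const_add
    (cos ψ ^ 2)).congr_deriv (by push_cast; ring)

lemma hasDerivAt_jacobiDenom_right (k φ ψ : ℝ) :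
    HasDerivAt (jacobiDenom k φ) (-2 * sin ψ * cos ψ * (1 - k ^ 2 * sin φ ^ 2)) ψ :=
  (((hasDerivAt_cos ψ).fun_pow 2).fun_add (((hasDerivAt_sin ψ).fun_pow 2).const_mul
    (k ^ 2 * sin φ ^ 2))).congr_deriv (by push_cast; ring)

lemma hasDerivAt_sin_mul_ellipticDelta (hk : k ^ 2 < 1) (φ : ℝ) :
    HasDerivAt (fun φ => sin φ * ellipticDelta k φ)
      (cos φ * (1 - 2 * k ^ 2 * sin φ ^ 2) / ellipticDelta k φ) φ := by
  refine ((hasDerivAt_sin φ).fun_mul (hasDerivAt_ellipticDelta hk φ)).congr_deriv ?_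
  field_simp [ellipticDelta_ne_zero hk φ]
  rw [ellipticDelta_sq hk]
  ring

lemma hasDerivAt_complexCn_left (hk : k ^ 2 < 1) (hl : l ^ 2 < 1) (hkl : k ^ 2 + l ^ 2 = 1)
    (hψ : ψ ∈ Ioo (-(π / 2)) (π / 2)) (φ : ℝ) :
    HasDerivAt (complexCn k l · ψ)
      (-(complexSn k l φ ψ * complexDn k l φ ψ) / ellipticDelta k φ) φ := by
  have hD := ofReal_jacobiDenom_ne_zero (k := k) hψ φ
  have hd : (ellipticDelta k φ : ℂ) ≠ 0 := mod_cast ellipticDelta_ne_zero hk φ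
  have hre := (hasDerivAt_cos φ).ofReal_comp.mul_const (cos ψ : ℂ)
  have him := (((hasDerivAt_sin_mul_ellipticDelta hk φ).ofReal_comp.mul_const
    (sin ψ : ℂ)).mul_const (ellipticDelta l ψ : ℂ)).mul_const Complex.I
  simp only [Complex.ofReal_mul] at him
  refine ((hre.fun_sub him).fun_div (hasDerivAt_jacobiDenom_left k φ ψ).ofReal_comp
    hD).congr_deriv ?_
  have key := complexCn_deriv_left_identity (sin_sq_add_cos_sq φ) (sin_sq_add_cos_sq ψ)
    (ellipticDelta_sq hk φ) (ellipticDelta_sq hl ψ) hkl (jacobiDenom.eq_1 k φ ψ)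
  rw [complexSn, complexDn]
  simp only [Complex.ofReal_mul, Complex.ofReal_neg, Complex.ofReal_pow, Complex.ofReal_ofNat,
    Complex.ofReal_div, Complex.ofReal_sub, Complex.ofReal_one]
  field_simp
  linear_combination key

lemma hasDerivAt_complexCn_right (hk : k ^ 2 < 1) (hl : l ^ 2 < 1) (hkl : k ^ 2 + l ^ 2 = 1)
    (hψ : ψ ∈ Ioo (-(π / 2)) (π / 2)) (φ : ℝ) :
    HasDerivAt (complexCn k l φ)
      (-(Complex.I * (complexSn k l φ ψ * complexDn k l φ ψ)) / ellipticDelta l ψ) ψ := by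
  have hD := ofReal_jacobiDenom_ne_zero (k := k) hψ φ
  have hd : (ellipticDelta l ψ : ℂ) ≠ 0 := mod_cast ellipticDelta_ne_zero hl ψ
  have hre := (hasDerivAt_cos ψ).ofReal_comp.const_mul (cos φ : ℂ)
  have him := ((hasDerivAt_sin_mul_ellipticDelta hl ψ).ofReal_comp.const_mul
    (sin φ * ellipticDelta k φ : ℂ)).mul_const Complex.I
  simp only [Complex.ofReal_mul, ← mul_assoc] at him
  refine ((hre.fun_sub him).fun_div (hasDerivAt_jacobiDenom_right k φ ψ).ofReal_comp
    hD).congr_deriv ?_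
  have key := complexCn_deriv_right_identity (sin_sq_add_cos_sq φ) (sin_sq_add_cos_sq ψ)
    (ellipticDelta_sq hk φ) (ellipticDelta_sq hl ψ) hkl (jacobiDenom.eq_1 k φ ψ)
  rw [complexSn, complexDn]
  simp only [Complex.ofReal_mul, Complex.ofReal_neg, Complex.ofReal_pow, Complex.ofReal_ofNat,
    Complex.ofReal_div, Complex.ofReal_sub, Complex.ofReal_one]
  field_simp
  linear_combination key

end ComplexCn

/-- The integral of `cn(u + i v, k) exp (i ω u)` over `-K(k) ≤ u ≤ K(k)`, at `v = F(ψ, l)`, in the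
variable `φ = am u`. -/
noncomputable def cnTransform (k l ω ψ : ℝ) : ℂ :=
  ∫ φ in (-(π / 2))..(π / 2), complexCn k l φ ψ * (ellipticExp k ω φ / ellipticDelta k φ)

section CnTransform

variable {k l ω ψ : ℝ}

lemma cnTransform_eq_integral_deriv (hk : k ^ 2 < 1) (hl : l ^ 2 < 1) (hkl : k ^ 2 + l ^ 2 = 1)
    (hω : cos (ω * Kell k) = 0) (hψ : ψ ∈ Ioo (-(π / 2)) (π / 2)) :
    ω * cnTransform k l ω ψ = ∫ φ in (-(π / 2))..(π / 2),
      -(Complex.I * (complexSn k l φ ψ * complexDn k l φ ψ)) *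
        (ellipticExp k ω φ / ellipticDelta k φ) := by
  have hboundary : ellipticExp k ω (π / 2) + ellipticExp k ω (-(π / 2)) = 0 := by
    have := Complex.two_cos (ω * Kell k)
    rw [← Complex.ofReal_mul, ← Complex.ofReal_cos, hω] at this
    simpa [ellipticExp, ellipticF_neg, ellipticF_pi_div_two] using this.symm
  have hΔ : ∀ φ, (ellipticDelta k φ : ℂ) ≠ 0 := fun φ => mod_cast ellipticDelta_ne_zero hk φ
  have hsn : Continuous (complexSn k l · ψ) := continuousOn_univ.1 <|
    continuousOn_complexSn_comp continuousOn_id continuousOn_const fun _ _ => hψ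
  have hdn : Continuous (complexDn k l · ψ) := continuousOn_univ.1 <|
    continuousOn_complexDn_comp continuousOn_id continuousOn_const fun _ _ => hψ
  have hparts := intervalIntegral.integral_mul_deriv_eq_deriv_mul (a := -(π / 2)) (b := π / 2)
    (fun φ _ => hasDerivAt_complexCn_left hk hl hkl hψ φ)
    (fun φ _ => hasDerivAt_ellipticExp hk ω φ)
    (((hsn.mul hdn).neg.div (by fun_prop) hΔ).intervalIntegrable _ _)
    ((continuous_const.mul (continuous_ellipticExp_div_ellipticDelta hk ω)).intervalIntegrable _ _)
  rw [complexCn_neg_pi_div_two, neg_mul, sub_neg_eq_add, ← mul_add, hboundary, mul_zero,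
    zero_sub] at hparts
  calc ω * cnTransform k l ω ψ
    _ = -Complex.I * ∫ φ in (-(π / 2))..(π / 2), complexCn k l φ ψ *
          (ω * Complex.I * (ellipticExp k ω φ / ellipticDelta k φ)) := by
      rw [cnTransform, ← intervalIntegral.integral_const_mul, ← intervalIntegral.integral_const_mul]
      congr with φ
      linear_combination (ω * (complexCn k l φ ψ * (ellipticExp k ω φ / ellipticDelta k φ))) *
        Complex.I_sq
    _ = _ := by
      rw [hparts, neg_mul_neg, ← intervalIntegral.integral_const_mul]
      congr with φ
      ring

lemma hasDerivAt_cnTransform (hk : k ^ 2 < 1) (hl : l ^ 2 < 1) (hkl : k ^ 2 + l ^ 2 = 1)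
    (hω : cos (ω * Kell k) = 0) (hψ : ψ ∈ Ioo (-(π / 2)) (π / 2)) :
    HasDerivAt (cnTransform k l ω) (ω / ellipticDelta l ψ * cnTransform k l ω ψ) ψ := by
  have hexp := continuous_ellipticExp_div_ellipticDelta hk ω
  have hdiff := hasDerivAt_integral_of_continuousOn (a := -(π / 2)) (b := π / 2)
    (f := fun ψ φ => complexCn k l φ ψ * (ellipticExp k ω φ / ellipticDelta k φ))
    (f' := fun ψ φ => -(Complex.I * (complexSn k l φ ψ * complexDn k l φ ψ)) / ellipticDelta l ψ *
      (ellipticExp k ω φ / ellipticDelta k φ))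
    (Ioo_mem_nhds hψ.1 hψ.2)
    (fun y hy => (continuousOn_complexCn_comp (by fun_prop) (by fun_prop) fun _ _ => hy).mul
      hexp.continuousOn)
    ?_ fun y hy φ _ => (hasDerivAt_complexCn_right hk hl hkl hy φ).mul_const _
  · refine hdiff.congr_deriv ?_
    rw [div_mul_eq_mul_div, cnTransform_eq_integral_deriv hk hl hkl hω hψ,
      ← intervalIntegral.integral_div]
    congr with φ
    ring
  · have hmem : ∀ p ∈ Ioo (-(π / 2)) (π / 2) ×ˢ uIcc (-(π / 2)) (π / 2),
        p.1 ∈ Ioo (-(π / 2)) (π / 2) := fun p hp => hp.1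
    have hsn := continuousOn_complexSn_comp (k := k) (l := l) continuousOn_snd continuousOn_fst hmem
    have hdn := continuousOn_complexDn_comp (k := k) (l := l) continuousOn_snd continuousOn_fst hmem
    have hdelta : ∀ p : ℝ × ℝ, (ellipticDelta l p.1 : ℂ) ≠ 0 :=
      fun p => mod_cast ellipticDelta_ne_zero hl p.1
    exact .mul (.div (.neg (.mul (by fun_prop) (hsn.mul hdn))) (by fun_prop) fun p _ => hdelta p)
      (hexp.comp_continuousOn continuousOn_snd)

lemma cnTransform_eq_mul_exp (hk : k ^ 2 < 1) (hl : l ^ 2 < 1) (hkl : k ^ 2 + l ^ 2 = 1)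
    (hω : cos (ω * Kell k) = 0) (hψ : ψ ∈ Ioo (-(π / 2)) (π / 2)) :
    cnTransform k l ω ψ = cnTransform k l ω 0 * Complex.exp (ω * ellipticF l ψ) := by
  have hderiv : ∀ y ∈ Ioo (-(π / 2)) (π / 2), HasDerivAt
      (fun y => cnTransform k l ω y * Complex.exp (-(ω * ellipticF l y))) 0 y := fun y hy => by
    refine ((hasDerivAt_cnTransform hk hl hkl hω hy).fun_mul
      ((hasDerivAt_ellipticF hl y).ofReal_comp.const_mul (ω : ℂ)).fun_neg.cexp).congr_deriv ?_
    push_cast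
    ring
  have h0 : (0 : ℝ) ∈ Ioo (-(π / 2)) (π / 2) := by simp [pi_pos]
  have hconst := isOpen_Ioo.is_const_of_deriv_eq_zero isPreconnected_Ioo
    (fun y hy => (hderiv y hy).differentiableAt.differentiableWithinAt)
    (fun y hy => (hderiv y hy).deriv) hψ h0
  simp only [ellipticF_zero, Complex.ofReal_zero, mul_zero, neg_zero, Complex.exp_zero,
    mul_one] at hconst
  rw [← hconst, mul_assoc, ← Complex.exp_add, neg_add_cancel, Complex.exp_zero, mul_one]

lemma integral_reCn_smul_ellipticExp (hk : k ^ 2 < 1) (hl : l ^ 2 < 1) (hkl : k ^ 2 + l ^ 2 = 1)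
    (hω : cos (ω * Kell k) = 0) (hψ : ψ ∈ Ioo (-(π / 2)) (π / 2)) :
    ∫ φ in (-(π / 2))..(π / 2), reCn k φ ψ • (ellipticExp k ω φ / ellipticDelta k φ) =
      cosh (ω * ellipticF l ψ) * cnTransform k l ω 0 := by
  have hψ' : -ψ ∈ Ioo (-(π / 2)) (π / 2) := ⟨neg_lt_neg hψ.2, neg_lt.1 hψ.1⟩
  have hcont : ∀ y ∈ Ioo (-(π / 2)) (π / 2), IntervalIntegrable
      (fun φ => complexCn k l φ y * (ellipticExp k ω φ / ellipticDelta k φ)) volume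
      (-(π / 2)) (π / 2) := fun y hy =>
    ((continuousOn_complexCn_comp (by fun_prop) (by fun_prop) fun _ _ => hy).mul
      (continuous_ellipticExp_div_ellipticDelta hk ω).continuousOn).intervalIntegrable
  have hsum : 2 * ∫ φ in (-(π / 2))..(π / 2),
      reCn k φ ψ • (ellipticExp k ω φ / ellipticDelta k φ) =
        cnTransform k l ω ψ + cnTransform k l ω (-ψ) := by
    rw [cnTransform, cnTransform, ← intervalIntegral.integral_add (hcont ψ hψ) (hcont (-ψ) hψ'),
      ← intervalIntegral.integral_const_mul]
    simp only [← add_mul, complexCn_add_complexCn_neg_right, Complex.real_smul, mul_assoc]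
  rw [← mul_right_inj' (two_ne_zero (α := ℂ)), hsum, cnTransform_eq_mul_exp hk hl hkl hω hψ,
    cnTransform_eq_mul_exp hk hl hkl hω hψ', ellipticF_neg, ← mul_assoc]
  push_cast
  rw [Complex.two_cosh]
  ring_nf

end CnTransform

section Peak

variable {k ψ : ℝ} {E : Type*} [NormedAddCommGroup E] [NormedSpace ℝ E]

lemma continuous_reCn (hψ : ψ ∈ Ioo (-(π / 2)) (π / 2)) : Continuous (reCn k · ψ) := by
  refine .div (by fun_prop) ?_ fun φ => (jacobiDenom_pos hψ φ).ne'
  unfold jacobiDenom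
  fun_prop

lemma reCn_nonneg {φ : ℝ} (hφ : φ ∈ Icc (-(π / 2)) (π / 2)) (hψ : ψ ∈ Ioo (-(π / 2)) (π / 2)) :
    0 ≤ reCn k φ ψ :=
  div_nonneg (mul_nonneg (cos_nonneg_of_mem_Icc hφ) (cos_pos_of_mem_Ioo hψ).le)
    (jacobiDenom_pos hψ φ).le

lemma integral_reCn (hk : k ≠ 0) (hψ : ψ ∈ Ioo 0 (π / 2)) :
    ∫ φ in (-(π / 2))..(π / 2), reCn k φ ψ = 2 * arctan (k * tan ψ) / (k * sin ψ) := by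
  have hψ' : ψ ∈ Ioo (-(π / 2)) (π / 2) := ⟨by linarith [hψ.1, pi_pos], hψ.2⟩
  have hcos := (cos_pos_of_mem_Ioo hψ').ne'
  have hsin := (sin_pos_of_pos_of_lt_pi hψ.1 (by linarith [hψ.2, pi_pos])).ne'
  have hderiv (φ : ℝ) : HasDerivAt (fun φ => arctan (k * tan ψ * sin φ) / (k * sin ψ))
      (reCn k φ ψ) φ := by
    refine (((hasDerivAt_sin φ).const_mul (k * tan ψ)).arctan.div_const
      (k * sin ψ)).congr_deriv ?_
    have hden : 1 + (k * tan ψ * sin φ) ^ 2 = jacobiDenom k φ ψ / cos ψ ^ 2 := by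
      rw [tan_eq_sin_div_cos, jacobiDenom]
      field_simp
    rw [hden, reCn, tan_eq_sin_div_cos]
    field_simp [(jacobiDenom_pos (k := k) hψ' φ).ne']
  rw [intervalIntegral.integral_eq_sub_of_hasDerivAt (fun φ _ => hderiv φ)
    ((continuous_reCn hψ').intervalIntegrable _ _)]
  simp only [sin_neg, sin_pi_div_two, mul_one, mul_neg, arctan_neg]
  ring

lemma tendsto_integral_reCn (hk : 0 < k) :
    Tendsto (fun ψ => ∫ φ in (-(π / 2))..(π / 2), reCn k φ ψ) (𝓝[<] (π / 2)) (𝓝 (π / k)) := by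
  have harctan : Tendsto (fun ψ => arctan (k * tan ψ)) (𝓝[<] (π / 2)) (𝓝 (π / 2)) :=
    (tendsto_arctan_atTop.mono_right nhdsWithin_le_nhds).comp
      (tendsto_tan_pi_div_two.const_mul_atTop hk)
  have hlim := (harctan.const_mul 2).div (tendsto_sin_pi_div_two.const_mul k)
    (by simpa using hk.ne')
  rw [mul_one, mul_div_cancel₀ π two_ne_zero] at hlim
  refine hlim.congr' ?_
  filter_upwards [Ioo_mem_nhdsLT pi_div_two_pos] with ψ hψ using (integral_reCn hk.ne' hψ).symm

lemma tendstoUniformlyOn_reCn (hk : k ≠ 0) {u : Set ℝ} (hu : IsOpen u) (h0 : 0 ∈ u) :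
    TendstoUniformlyOn (fun ψ φ => reCn k φ ψ) 0 (𝓝[<] (π / 2))
      (Icc (-(π / 2)) (π / 2) \ u) := by
  have hcont : ContinuousOn (Function.uncurry fun ψ φ => reCn k φ ψ)
      (Ioc 0 (π / 2) ×ˢ (Icc (-(π / 2)) (π / 2) \ u)) := by
    refine .div (by fun_prop) (by unfold jacobiDenom; fun_prop) ?_
    rintro ⟨ψ, φ⟩ ⟨hψ, hφ, hφu⟩
    have hsinψ : sin ψ ≠ 0 :=
      (sin_pos_of_pos_of_lt_pi hψ.1 (by linarith [hψ.2, pi_pos])).ne'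
    have hsinφ : sin φ ≠ 0 := fun h => hφu <| by
      rwa [(sin_eq_zero_iff_of_lt_of_lt (by linarith [hφ.1, pi_pos])
        (by linarith [hφ.2, pi_pos])).1 h]
    have : 0 < jacobiDenom k φ ψ := by
      unfold jacobiDenom
      positivity
    exact this.ne'
  refine Metric.tendstoUniformlyOn_iff.2 fun ε hε => ?_
  obtain ⟨v, hv, hvε⟩ := (isCompact_Icc.diff hu).mem_uniformity_of_prod hcont
    (right_mem_Ioc.2 pi_div_two_pos) (Metric.dist_mem_uniformity hε)
  rw [nhdsWithin_Ioc_eq_nhdsLE pi_div_two_pos] at hv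
  filter_upwards [nhdsWithin_mono _ Iio_subset_Iic_self hv] with ψ hψ φ hφ
  simpa [reCn, dist_comm] using hvε ψ hψ φ hφ

lemma tendsto_integral_reCn_smul [CompleteSpace E] (hk : 0 < k) {g : ℝ → E} (hg : Continuous g) :
    Tendsto (fun ψ => ∫ φ in (-(π / 2))..(π / 2), reCn k φ ψ • g φ) (𝓝[<] (π / 2))
      (𝓝 ((π / k) • g 0)) := by
  have hc : k / π * (π / k) = 1 := by field_simp
  have hle : -(π / 2) ≤ π / 2 := by linarith [pi_pos]
  have hψ : ∀ᶠ ψ in 𝓝[<] (π / 2), ψ ∈ Ioo (-(π / 2)) (π / 2) :=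
    Ioo_mem_nhdsLT (by linarith [pi_pos])
  have hg' : Continuous fun φ => (π / k) • g φ := hg.const_smul (π / k)
  have hpeak := tendsto_setIntegral_peak_smul_of_integrableOn_of_tendsto (μ := volume)
    (φ := fun ψ φ => k / π * reCn k φ ψ) (l := 𝓝[<] (π / 2)) (x₀ := 0)
    (s := Ioc (-(π / 2)) (π / 2)) measurableSet_Ioc measurableSet_Ioc Subset.rfl
    self_mem_nhdsWithin measure_Ioc_lt_top.ne ?_ ?_ ?_ ?_ hg'.integrableOn_Ioc
    ((hg'.tendsto 0).mono_left nhdsWithin_le_nhds)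
  · refine hpeak.congr fun ψ => ?_
    simp only [intervalIntegral.integral_of_le hle, smul_smul]
    congr with φ
    rw [mul_right_comm, hc, one_mul]
  · filter_upwards [hψ] with ψ hψ φ hφ
    exact mul_nonneg (by positivity) (reCn_nonneg (Ioc_subset_Icc_self hφ) hψ)
  · intro u hu h0
    have := (uniformContinuous_const_smul (k / π)).comp_tendstoUniformlyOn
      ((tendstoUniformlyOn_reCn hk.ne' hu h0).mono (sdiff_subset_sdiff_left Ioc_subset_Icc_self))
    exact this.congr_right fun φ _ => by simp
  · have := (tendsto_integral_reCn hk).const_mul (k / π)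
    simpa only [hc, intervalIntegral.integral_of_le hle, integral_const_mul] using this
  · filter_upwards [hψ] with ψ hψ
    exact (continuous_const.mul (continuous_reCn hψ)).aestronglyMeasurable

end Peak

/-- The integrand `cn(u, k) exp (i ω u) du` of the Fourier coefficients of `cn`, in the variable
`φ = am u`. -/
noncomputable def cnFourierIntegrand (k ω φ : ℝ) : ℂ :=
  cos φ * (ellipticExp k ω φ / ellipticDelta k φ)

section FourierIntegral

variable {k l ω : ℝ}

lemma continuous_cnFourierIntegrand (hk : k ^ 2 < 1) (ω : ℝ) :
    Continuous (cnFourierIntegrand k ω) :=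
  .mul (by fun_prop) (continuous_ellipticExp_div_ellipticDelta hk ω)

lemma cnTransform_zero_right : cnTransform k l ω 0 =
    ∫ φ in (-(π / 2))..(π / 2), cnFourierIntegrand k ω φ := by
  simp only [cnTransform, complexCn_zero_right, cnFourierIntegrand]

lemma integral_cnFourierIntegrand (hk0 : 0 < k) (hk : k ^ 2 < 1) (hkl : k ^ 2 + l ^ 2 = 1)
    (hω : cos (ω * Kell k) = 0) :
    ∫ φ in (-(π / 2))..(π / 2), cnFourierIntegrand k ω φ =
      ((π / (k * cosh (ω * Kell l)) : ℝ) : ℂ) := by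
  have hl : l ^ 2 < 1 := by linarith [pow_pos hk0 2]
  have hpeak : Tendsto (fun ψ => ∫ φ in (-(π / 2))..(π / 2),
      reCn k φ ψ • (ellipticExp k ω φ / ellipticDelta k φ)) (𝓝[<] (π / 2)) (𝓝 (π / k : ℝ)) := by
    simpa [ellipticExp, ellipticF_zero, ellipticDelta_zero] using
      tendsto_integral_reCn_smul hk0 (continuous_ellipticExp_div_ellipticDelta hk ω)
  have hcosh : Tendsto (fun ψ => (cosh (ω * ellipticF l ψ) : ℂ) * cnTransform k l ω 0)
      (𝓝[<] (π / 2)) (𝓝 (cosh (ω * Kell l) * cnTransform k l ω 0)) := by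
    have hF := continuous_ellipticF hl
    rw [← ellipticF_pi_div_two]
    exact (Continuous.tendsto (by fun_prop) (π / 2)).mono_left nhdsWithin_le_nhds
  have hlim := tendsto_nhds_unique_of_eventuallyEq hcosh hpeak <| by
    filter_upwards [Ioo_mem_nhdsLT (by linarith [pi_pos] : -(π / 2) < π / 2)] with ψ hψ
      using (integral_reCn_smul_ellipticExp hk hl hkl hω hψ).symm
  have hne : (cosh (ω * Kell l) : ℂ) ≠ 0 := Complex.ofReal_ne_zero.2 (cosh_pos _).ne'
  rw [← cnTransform_zero_right, ← div_div, Complex.ofReal_div, eq_div_iff hne, mul_comm, hlim]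

lemma cnFourierIntegrand_add_pi (hk : k ^ 2 < 1) (ω φ : ℝ) : cnFourierIntegrand k ω (φ + π) =
    -Complex.exp (2 * (ω * Kell k) * Complex.I) * cnFourierIntegrand k ω φ := by
  rw [cnFourierIntegrand, cnFourierIntegrand, ellipticExp_add_pi hk, ellipticDelta_periodic,
    cos_add_pi]
  push_cast
  ring

lemma integral_cnFourierIntegrand_two_pi (hk0 : 0 < k) (hk : k ^ 2 < 1)
    (hkl : k ^ 2 + l ^ 2 = 1) (hω : cos (ω * Kell k) = 0) :
    ∫ φ in 0..(2 * π), cnFourierIntegrand k ω φ =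
      ((2 * π / (k * cosh (ω * Kell l)) : ℝ) : ℂ) := by
  have hp : Function.Periodic (cnFourierIntegrand k ω) π := fun φ => by
    rw [cnFourierIntegrand_add_pi hk, ← Complex.ofReal_mul,
      (neg_exp_two_mul_mul_I_eq_one_iff _).2 hω, one_mul]
  calc ∫ φ in 0..(2 * π), cnFourierIntegrand k ω φ
    _ = 2 * ∫ φ in 0..π, cnFourierIntegrand k ω φ := by
      simpa using hp.intervalIntegral_add_zsmul_eq 2 0 fun _ _ =>
        (continuous_cnFourierIntegrand hk ω).intervalIntegrable _ _
    _ = 2 * ∫ φ in (-(π / 2))..(π / 2), cnFourierIntegrand k ω φ := by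
      simpa [show -(π / 2) + π = π / 2 by ring] using hp.intervalIntegral_add_eq 0 (-(π / 2))
    _ = ((2 * π / (k * cosh (ω * Kell l)) : ℝ) : ℂ) := by
      rw [integral_cnFourierIntegrand hk0 hk hkl hω]
      push_cast
      ring

lemma integral_cnFourierIntegrand_eq_zero {m n : ℕ} (hk : k ^ 2 < 1) (hn : 0 < n)
    (hω : ω * Kell k = π * m / (2 * n)) (hcos : cos (ω * Kell k) ≠ 0) :
    ∫ φ in 0..(2 * n * π), cnFourierIntegrand k ω φ = 0 := by
  have hpow : (-Complex.exp (2 * (ω * Kell k) * Complex.I)) ^ (2 * n) = 1 := by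
    rw [(even_two_mul n).neg_pow, ← Complex.exp_nat_mul, ← Complex.ofReal_mul, hω,
      ← Complex.exp_nat_mul_two_pi_mul_I m]
    have hn0 : (n : ℂ) ≠ 0 := Nat.cast_ne_zero.2 hn.ne'
    congr 1
    push_cast
    field_simp
  have hρ : -Complex.exp (2 * (ω * Kell k) * Complex.I) ≠ 1 := by
    rwa [← Complex.ofReal_mul, Ne, neg_exp_two_mul_mul_I_eq_one_iff]
  simpa using integral_eq_zero_of_add_eq_mul (cnFourierIntegrand_add_pi hk ω) hpow hρ

lemma integral_cos_mul_cos_ellipticF_add (hk : k ^ 2 < 1) (ω θ T : ℝ) :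
    ∫ φ in 0..T, cos φ * (cos (ω * ellipticF k φ + θ) / ellipticDelta k φ) =
      (Complex.exp (θ * Complex.I) * ∫ φ in 0..T, cnFourierIntegrand k ω φ).re := by
  have hre (φ : ℝ) : cos φ * (cos (ω * ellipticF k φ + θ) / ellipticDelta k φ) =
      Complex.reCLM (Complex.exp (θ * Complex.I) * cnFourierIntegrand k ω φ) := by
    have hexp : Complex.exp (θ * Complex.I) * cnFourierIntegrand k ω φ =
        ((cos φ / ellipticDelta k φ : ℝ) : ℂ) *
          Complex.exp ((ω * ellipticF k φ + θ : ℝ) * Complex.I) := by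
      rw [cnFourierIntegrand, ellipticExp, Complex.ofReal_add, add_mul, Complex.exp_add]
      push_cast
      ring
    rw [hexp, Complex.reCLM_apply, Complex.re_ofReal_mul, Complex.exp_ofReal_mul_I_re]
    ring
  simp only [hre]
  rw [Complex.reCLM.intervalIntegral_comp_comm, intervalIntegral.integral_const_mul,
    Complex.reCLM_apply]
  exact (continuous_const.mul (continuous_cnFourierIntegrand hk ω)).intervalIntegrable _ _

lemma integral_cos_mul_cos_ellipticF_add_of_coprime {m n : ℕ} (hk0 : 0 < k) (hk : k ^ 2 < 1)
    (hkl : k ^ 2 + l ^ 2 = 1) (hn : 0 < n) (hmn : m.Coprime n)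
    (hω : ω * Kell k = π * m / (2 * n)) (θ : ℝ) :
    ∫ φ in 0..(2 * n * π), cos φ * (cos (ω * ellipticF k φ + θ) / ellipticDelta k φ) =
      if n = 1 ∧ Odd m then 2 * π / (k * cosh (ω * Kell l)) * cos θ else 0 := by
  have hcos := cos_pi_mul_div_two_mul_eq_zero_iff hn hmn
  rw [← hω] at hcos
  rw [integral_cos_mul_cos_ellipticF_add hk]
  split_ifs with h
  · rw [h.1, Nat.cast_one, mul_one, integral_cnFourierIntegrand_two_pi hk0 hk hkl (hcos.2 h),
      Complex.re_mul_ofReal, Complex.exp_ofReal_mul_I_re, mul_comm]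
  · rw [integral_cnFourierIntegrand_eq_zero hk hn hω (mt hcos.1 h), mul_zero, Complex.zero_re]

lemma integral_sq_mul_cos_sq_div_ellipticDelta (hk : k ^ 2 < 1) (n : ℕ) :
    ∫ φ in 0..(2 * n * π), k ^ 2 * cos φ ^ 2 / ellipticDelta k φ =
      4 * n * (Eell k - (1 - k ^ 2) * Kell k) := by
  have hint (φ : ℝ) : k ^ 2 * cos φ ^ 2 / ellipticDelta k φ =
      ellipticDelta k φ - (1 - k ^ 2) * (1 / ellipticDelta k φ) := by
    field_simp [ellipticDelta_ne_zero hk φ]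
    rw [ellipticDelta_sq hk, cos_sq']
    ring
  have hinv := continuous_inv_ellipticDelta hk
  calc ∫ φ in 0..(2 * n * π), k ^ 2 * cos φ ^ 2 / ellipticDelta k φ
    _ = 4 * n * ∫ φ in 0..(π / 2), k ^ 2 * cos φ ^ 2 / ellipticDelta k φ := by
      have hcont : Continuous fun φ => k ^ 2 * cos φ ^ 2 / ellipticDelta k φ :=
        .div (by fun_prop) continuous_ellipticDelta (ellipticDelta_ne_zero hk)
      have := integral_nat_mul_period_of_even (T := π)
        (fun φ => by simp only [ellipticDelta_even φ, cos_neg])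
        (fun φ => by simp only [ellipticDelta_periodic φ, cos_add_pi, neg_sq])
        (fun _ _ => hcont.intervalIntegrable _ _) (2 * n)
      simpa [← mul_assoc, show (2 : ℝ) * 2 = 4 by norm_num] using this
    _ = 4 * n * (Eell k - (1 - k ^ 2) * Kell k) := by
      simp only [hint]
      rw [intervalIntegral.integral_sub (continuous_ellipticDelta.intervalIntegrable _ _)
        ((hinv.const_mul _).intervalIntegrable _ _), intervalIntegral.integral_const_mul]
      rfl

end FourierIntegral

section Pendulum

/-- The vector field of the unperturbed pendulum `ẋ₁ = x₂`, `ẋ₂ = -sin x₁`. -/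
noncomputable def pendulumField (p : ℝ × ℝ) : ℝ × ℝ := (p.2, -sin p.1)

/-- The librational orbit of the pendulum of modulus `k`, parametrized by the amplitude
`φ = am t`. -/
noncomputable def pendulumOrbit (k φ : ℝ) : ℝ × ℝ := (2 * arcsin (k * sin φ), 2 * k * cos φ)

variable {k : ℝ}

lemma lipschitzWith_pendulumField : LipschitzWith 1 pendulumField :=
  .of_dist_le_mul fun p q => by
    simp only [pendulumField, Prod.dist_eq, NNReal.coe_one, one_mul, dist_neg_neg]
    exact max_le (le_max_right _ _) ((abs_sin_sub_sin_le _ _).trans (le_max_left _ _))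

lemma hasDerivAt_pendulumOrbit (hk : k ^ 2 < 1) (φ : ℝ) :
    HasDerivAt (pendulumOrbit k) ((1 / ellipticDelta k φ) • pendulumField (pendulumOrbit k φ))
      φ := by
  have hmem : -1 < k * sin φ ∧ k * sin φ < 1 := by
    rw [← abs_lt, ← sq_lt_one_iff_abs_lt_one, mul_pow]
    linarith [one_sub_sq_mul_sin_sq_pos hk φ]
  refine HasDerivAt.prodMk ?_ ?_
  · refine (((hasDerivAt_arcsin hmem.1.ne' hmem.2.ne).comp φ
      ((hasDerivAt_sin φ).const_mul k)).const_mul 2).congr_deriv ?_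
    rw [mul_pow, ← ellipticDelta]
    simp only [pendulumField, pendulumOrbit, smul_eq_mul]
    ring
  · refine ((hasDerivAt_cos φ).const_mul (2 * k)).congr_deriv ?_
    simp only [pendulumField, pendulumOrbit, smul_eq_mul]
    rw [sin_two_mul, sin_arcsin hmem.1.le hmem.2.le, cos_arcsin, mul_pow, ← ellipticDelta]
    field_simp [ellipticDelta_ne_zero hk φ]

lemma comp_ellipticF_eq_pendulumOrbit (hk : k ^ 2 < 1) {x : ℝ → ℝ × ℝ}
    (hx0 : x 0 = (0, 2 * k)) (hx : ∀ t, HasDerivAt x (pendulumField (x t)) t) :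
    x ∘ ellipticF k = pendulumOrbit k := by
  have hbound (φ : ℝ) : |1 / ellipticDelta k φ| ≤ (1 / √(1 - k ^ 2)).toNNReal := by
    have hsqrt : 0 < √(1 - k ^ 2) := sqrt_pos.2 (sub_pos.2 hk)
    rw [coe_toNNReal _ (by positivity), abs_of_pos (one_div_pos.2 (ellipticDelta_pos hk φ))]
    refine one_div_le_one_div_of_le hsqrt (sqrt_le_sqrt (sub_le_sub_left ?_ 1))
    exact mul_le_of_le_one_right (sq_nonneg k) (sin_sq_le_one φ)
  refine eq_of_hasDerivAt_smul lipschitzWith_pendulumField hbound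
    (fun φ => (hx (ellipticF k φ)).scomp φ (hasDerivAt_ellipticF hk φ))
    (hasDerivAt_pendulumOrbit hk) (t₀ := 0) ?_
  simp [ellipticF_zero, pendulumOrbit, hx0]

lemma integral_melnikov_ellipticF (hk : k ^ 2 < 1) {x : ℝ → ℝ × ℝ}
    (hx0 : x 0 = (0, 2 * k)) (hx : ∀ t, HasDerivAt x (pendulumField (x t)) t)
    (β δ ω θ T : ℝ) :
    ∫ t in 0..ellipticF k T, (x t).2 * (β * cos (ω * t + θ) - δ * (x t).2) =
      2 * k * β * (∫ φ in 0..T, cos φ * (cos (ω * ellipticF k φ + θ) / ellipticDelta k φ)) -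
        4 * δ * ∫ φ in 0..T, k ^ 2 * cos φ ^ 2 / ellipticDelta k φ := by
  have hF := continuous_ellipticF hk
  have hx_cont : Continuous x := continuous_iff_continuousAt.2 fun t => (hx t).continuousAt
  have hsubst := intervalIntegral.integral_comp_mul_deriv (a := 0) (b := T)
    (fun φ _ => hasDerivAt_ellipticF hk φ) (continuous_inv_ellipticDelta hk).continuousOn
    (g := fun t => (x t).2 * (β * cos (ω * t + θ) - δ * (x t).2)) (by fun_prop)
  have horbit (φ : ℝ) : x (ellipticF k φ) = pendulumOrbit k φ :=
    congrFun (comp_ellipticF_eq_pendulumOrbit hk hx0 hx) φ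
  have hforcing : Continuous fun φ =>
      cos φ * (cos (ω * ellipticF k φ + θ) / ellipticDelta k φ) :=
    .mul (by fun_prop) (.div (by fun_prop) (by fun_prop) (ellipticDelta_ne_zero hk))
  have hdamping : Continuous fun φ => k ^ 2 * cos φ ^ 2 / ellipticDelta k φ :=
    .div (by fun_prop) (by fun_prop) (ellipticDelta_ne_zero hk)
  rw [ellipticF_zero] at hsubst
  rw [← hsubst, ← intervalIntegral.integral_const_mul, ← intervalIntegral.integral_const_mul,
    ← intervalIntegral.integral_sub ((hforcing.const_mul _).intervalIntegrable _ _)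
      ((hdamping.const_mul _).intervalIntegrable _ _)]
  congr with φ
  simp only [Function.comp_apply, horbit, pendulumOrbit]
  ring

end Pendulum

/-- Let `k ∈ (0,1)`, `m, n` relatively prime positive integers with `ω = πm/(2nK(k))`.
Then for all real `β, δ, θ`, the subharmonic Melnikov integral of the forced damped pendulum
along the periodic orbit `x^k` (the solution of `ẋ₁ = x₂`, `ẋ₂ = −sin x₁` with
`x^k(0) = (0, 2k)`) evaluates as
`∫₀^{2πm/ω} x^k₂(t)(β cos(ωt+θ) − δ x^k₂(t)) dt = −16nδ(E(k) − (1−k²)K(k)) + J₂ β cos θ`,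
with `J₂ = 4π sech(ωK(k'))` if `n = 1` and `m` is odd, and `J₂ = 0` otherwise. -/
theorem stmt_13 (k : ℝ) (hk : k ∈ Set.Ioo (0 : ℝ) 1) (m n : ℕ) (hm : 0 < m) (hn : 0 < n)
    (hmn : Nat.Coprime m n) (ω : ℝ) (hω : ω = π * m / (2 * n * Kell k))
    (x : ℝ → ℝ × ℝ) (hx0 : x 0 = (0, 2 * k))
    (hx1 : ∀ t : ℝ, HasDerivAt (fun s => (x s).1) ((x t).2) t)
    (hx2 : ∀ t : ℝ, HasDerivAt (fun s => (x s).2) (-Real.sin ((x t).1)) t)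
    (β δ θ : ℝ) :
    ∫ t in (0 : ℝ)..(2 * π * m / ω), (x t).2 * (β * Real.cos (ω * t + θ) - δ * (x t).2)
      = -16 * n * δ * (Eell k - (1 - k ^ 2) * Kell k)
        + (if n = 1 ∧ Odd m then 4 * π * (1 / Real.cosh (ω * Kell (Real.sqrt (1 - k ^ 2)))) else 0)
          * β * Real.cos θ := by
  have hk2 : k ^ 2 < 1 := (sq_lt_one_iff₀ hk.1.le).2 hk.2
  have hkl : k ^ 2 + √(1 - k ^ 2) ^ 2 = 1 := by rw [sq_sqrt (sub_pos.2 hk2).le]; ring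
  have hK := Kell_pos hk2
  have hωK : ω * Kell k = π * m / (2 * n) := by rw [hω]; field_simp
  have hperiod : 2 * π * m / ω = ellipticF k (2 * n * π) := by
    have := ellipticF_nat_mul_pi hk2 (2 * n)
    push_cast at this
    rw [this, hω]
    field_simp
  have hx (t : ℝ) : HasDerivAt x (pendulumField (x t)) t := (hx1 t).prodMk (hx2 t)
  rw [hperiod, integral_melnikov_ellipticF hk2 hx0 hx,
    integral_sq_mul_cos_sq_div_ellipticDelta hk2,
    integral_cos_mul_cos_ellipticF_add_of_coprime hk.1 hk2 hkl hn hmn hωK]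
  have hk0 := hk.1
  split_ifs
  · field_simp
    ring
  · ring
end
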